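/- Let q = r² for a prime power r, let C ≤ F_q^{2n} be a Hermitian self-dual code, and let E ≤ C be a subspace of dimension n−1. Then the number of Hermitian self-dual codes D ≤ F_q^{2n} with E ≤ D is exactly r+1. -/

import Mathlib

noncomputable section

namespace KneserHeckeCodes

open Finset

variable {F : Type} [Field F] [Fintype F]

/-- The all-ones vector. -/
def allOnes (F : Type) [One F] (N : ℕ) : Fin N → F := fun _ => 1

/-- The dual code with respect to the (bilinear or Hermitian) form
`b(x,y) = ∑ i, x i * f (y i)`. -/
def dualCode {N : ℕ} (f : F → F) (C : Submodule F (Fin N → F)) : Submodule F (Fin N → F) where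
  carrier := {v | ∀ c ∈ C, ∑ i, v i * f (c i) = 0}
  add_mem' := by
    intro a b ha hb c hc
    have h1 := ha c hc
    have h2 := hb c hc
    change ∑ i, a i * f (c i) = 0 at h1
    change ∑ i, b i * f (c i) = 0 at h2
    change ∑ i, (a + b) i * f (c i) = 0
    simp [Pi.add_apply, add_mul, Finset.sum_add_distrib, h1, h2]
  zero_mem' := by
    intro c hc
    simp
  smul_mem' := by
    intro r a ha c hc
    have h := ha c hc
    change ∑ i, a i * f (c i) = 0 at h
    change ∑ i, (r • a) i * f (c i) = 0
    simp [Pi.smul_apply, smul_eq_mul, mul_assoc, ← Finset.mul_sum, h]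

/-- Action of a coordinate permutation on a code. -/
def permCode {N : ℕ} (π : Equiv.Perm (Fin N)) (C : Submodule F (Fin N → F)) :
    Submodule F (Fin N → F) :=
  C.map (LinearMap.funLeft F F π)

/-- Permutation equivalence of codes. -/
def equivCode {N : ℕ} (C D : Submodule F (Fin N → F)) : Prop :=
  ∃ π : Equiv.Perm (Fin N), permCode π C = D

/-- The order of the automorphism group of a code. -/
def autCard {N : ℕ} (C : Submodule F (Fin N → F)) : ℕ :=
  Nat.card {π : Equiv.Perm (Fin N) // permCode π C = C}

/-- `mon c v` is the number of columns of the `m × N` matrix with rows `c` equal to `v`. -/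
def mon {m N : ℕ} (c : Fin m → (Fin N → F)) (v : Fin m → F) : ℕ :=
  Nat.card {i : Fin N // ∀ j, c j i = v j}

/-- `aX X C` is the number of `m`-tuples of codewords of `C` with monomial `X`. -/
def aX {m N : ℕ} (X : (Fin m → F) → ℕ) (C : Submodule F (Fin N → F)) : ℕ :=
  Nat.card {c : Fin m → (Fin N → F) // (∀ j, c j ∈ C) ∧ mon c = X}

/-- The set `M_m` of monomials of degree `N` in genus `m`. -/
def MmSet (F : Type) [Fintype F] (m N : ℕ) : Set ((Fin m → F) → ℕ) :=
  {X | ∑ v, X v = N}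

/-- The rank of a monomial. -/
def rkX (F : Type) [Field F] {m : ℕ} (X : (Fin m → F) → ℕ) : ℕ :=
  Module.finrank F (Submodule.span F {v : Fin m → F | 0 < X v})

/-- The set `M*_m` of monomials of degree `N` and full rank `m`. -/
def MstarSet (F : Type) [Field F] [Fintype F] (m N : ℕ) : Set ((Fin m → F) → ℕ) :=
  {X | X ∈ MmSet F m N ∧ rkX F X = m}

instance finiteSubmodule {N : ℕ} : Finite (Submodule F (Fin N → F)) :=
  Finite.of_injective (fun C => (C : Set (Fin N → F))) SetLike.coe_injective

/-- The set of equivalence classes of codes in the family `𝓕`. -/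
abbrev ClassesB {N : ℕ} (𝓕 : Set (Submodule F (Fin N → F))) : Type :=
  Quot (fun C D : 𝓕 => equivCode C.1 D.1)

/-- The equivalence class of a code. -/
def clsOf {N : ℕ} {𝓕 : Set (Submodule F (Fin N → F))} (C : 𝓕) : ClassesB 𝓕 :=
  Quot.mk _ C

/-- A representative of an equivalence class. -/
def repB {N : ℕ} {𝓕 : Set (Submodule F (Fin N → F))} (b : ClassesB 𝓕) : 𝓕 :=
  Quot.out b

/-- The Hermitian inner product on `V` with `([C],[D]) = |Aut C| δ_{[C],[D]}`. -/
def innerV {N : ℕ} (𝓕 : Set (Submodule F (Fin N → F))) (v w : ClassesB 𝓕 → ℂ) : ℂ :=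
  letI : Fintype (ClassesB 𝓕) := Fintype.ofFinite _
  ∑ b : ClassesB 𝓕, (starRingEnd ℂ) (v b) * w b * (autCard (repB b).1 : ℂ)

/-- The `k`-th Kneser-Hecke operator `T_k` on `V`, where `n` is the dimension of the codes:
`T_k [C] = ∑_{D ∈ 𝓕, dim (C ⊓ D) = n - k} [D]`. -/
def heckeT {N : ℕ} (𝓕 : Set (Submodule F (Fin N → F))) (n k : ℕ)
    (v : ClassesB 𝓕 → ℂ) : ClassesB 𝓕 → ℂ :=
  letI : Fintype (ClassesB 𝓕) := Fintype.ofFinite _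
  fun b' => ∑ b : ClassesB 𝓕, v b *
    (Nat.card {D : 𝓕 // Module.finrank F ↥((repB b).1 ⊓ D.1) + k = n ∧ clsOf D = b'} : ℂ)

/-- The linear extension of `a_X` to `V`. -/
def aXc {N m : ℕ} (𝓕 : Set (Submodule F (Fin N → F))) (X : (Fin m → F) → ℕ)
    (v : ClassesB 𝓕 → ℂ) : ℂ :=
  letI : Fintype (ClassesB 𝓕) := Fintype.ofFinite _
  ∑ b : ClassesB 𝓕, v b * (aX X (repB b).1 : ℂ)

/-- `V_m`, the joint kernel of all `a_X`, `X ∈ M_m`. -/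
def VmSet {N : ℕ} (𝓕 : Set (Submodule F (Fin N → F))) (m : ℕ) : Set (ClassesB 𝓕 → ℂ) :=
  {v | ∀ X ∈ MmSet F m N, aXc 𝓕 X v = 0}

/-- `V_{m-1}` (with `V_{-1} = V`). -/
def VmPred {N : ℕ} (𝓕 : Set (Submodule F (Fin N → F))) (m : ℕ) : Set (ClassesB 𝓕 → ℂ) :=
  match m with
  | 0 => Set.univ
  | m + 1 => VmSet 𝓕 m

/-- `W_m = V_m^⊥`. -/
def WmSet {N : ℕ} (𝓕 : Set (Submodule F (Fin N → F))) (m : ℕ) : Set (ClassesB 𝓕 → ℂ) :=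
  {w | ∀ v ∈ VmSet 𝓕 m, innerV 𝓕 w v = 0}

/-- `Y_m = W_m ∩ V_{m-1}`. -/
def YmSet {N : ℕ} (𝓕 : Set (Submodule F (Fin N → F))) (m : ℕ) : Set (ClassesB 𝓕 → ℂ) :=
  WmSet 𝓕 m ∩ VmPred 𝓕 m

/-- `∑_{E ∈ E_C(c)} α_E`, counted as the number of pairs `(E, D)` with `E ≤ C` of
dimension `n-1` containing all entries of `c` and `D ∈ 𝓕` with `D ⊓ C = E`. -/
def pairCount {N : ℕ} (𝓕 : Set (Submodule F (Fin N → F))) (n : ℕ)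
    (C : Submodule F (Fin N → F)) {m : ℕ} (c : Fin m → (Fin N → F)) : ℕ :=
  Nat.card {ED : Submodule F (Fin N → F) × 𝓕 //
    ED.1 ≤ C ∧ Module.finrank F ↥ED.1 + 1 = n ∧ (∀ j, c j ∈ ED.1) ∧ ED.2.1 ⊓ C = ED.1}

/-- Condition ⋆ at level `m` for the subset `M⁰ ⊆ M*_m` with constant `α`. -/
def CondStar {N : ℕ} (𝓕 : Set (Submodule F (Fin N → F))) (n m : ℕ)
    (M0 : Set ((Fin m → F) → ℕ)) (α : ℕ) : Prop :=
  M0 ⊆ MstarSet F m N ∧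
  VmSet 𝓕 m = {v | v ∈ VmPred 𝓕 m ∧ ∀ X ∈ M0, aXc 𝓕 X v = 0} ∧
  ∀ C ∈ 𝓕, ∀ c : Fin m → (Fin N → F), (∀ j, c j ∈ C) → mon c ∈ M0 →
    pairCount 𝓕 n C c = α

/-- The genus-`m` complete weight enumerator. -/
def cwe {N : ℕ} (m : ℕ) (C : Submodule F (Fin N → F)) : MvPolynomial (Fin m → F) ℂ :=
  letI : Fintype C := Fintype.ofFinite _
  ∑ c : Fin m → C, MvPolynomial.monomial
    (Finsupp.equivFunOnFinite.symm (mon (fun j => (c j : Fin N → F)))) (1 : ℂ)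

end KneserHeckeCodes

open KneserHeckeCodes


section Helpers

open Module

/-- The form. -/
def hF {F : Type} [Field F] {N : ℕ} (s : F →+* F) (x y : Fin N → F) : F := ∑ i, x i * s (y i)

variable {F : Type} [Field F] [Fintype F] {N : ℕ} (s : F →+* F)

theorem hF_add_left (x y z : Fin N → F) : hF s (x + y) z = hF s x z + hF s y z := by
  simp [hF, add_mul, Finset.sum_add_distrib]

theorem hF_add_right (x y z : Fin N → F) : hF s x (y + z) = hF s x y + hF s x z := by
  simp [hF, mul_add, Finset.sum_add_distrib]

theorem hF_smul_left (a : F) (x z : Fin N → F) : hF s (a • x) z = a * hF s x z := by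
  simp [hF, Finset.mul_sum, mul_assoc]

theorem hF_smul_right (a : F) (x z : Fin N → F) : hF s x (a • z) = s a * hF s x z := by
  simp only [hF, Finset.mul_sum, Pi.smul_apply, smul_eq_mul, map_mul]
  exact Finset.sum_congr rfl fun i _ => by ring

theorem hF_symm (hs : ∀ x, s (s x) = x) (x y : Fin N → F) : s (hF s x y) = hF s y x := by
  simp only [hF, map_sum, map_mul, hs]
  exact Finset.sum_congr rfl fun i _ => by ring

theorem hF_symm0 (hs : ∀ x, s (s x) = x) {x y : Fin N → F} (h : hF s x y = 0) :
    hF s y x = 0 := by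
  rw [← hF_symm s hs, h, map_zero]

theorem mem_dual (C : Submodule F (Fin N → F)) (v : Fin N → F) :
    v ∈ dualCode (fun x => s x) C ↔ ∀ c ∈ C, hF s v c = 0 := Iff.rfl

/-- The functional `b(·, y)`. -/
def hFl (y : Fin N → F) : Module.Dual F (Fin N → F) where
  toFun x := hF s x y
  map_add' a b := hF_add_left s a b y
  map_smul' a b := hF_smul_left s a b y

theorem hF_nondeg (hs : ∀ x, s (s x) = x) (y : Fin N → F) (h : ∀ x, hF s x y = 0) : y = 0 := by
  funext i
  have := h (Pi.single i 1)
  simp only [hF, Pi.single_apply, ite_mul, one_mul, zero_mul, Finset.sum_ite_eq',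
    Finset.mem_univ, if_true] at this
  have h2 := hs (y i)
  rw [this, map_zero] at h2
  exact h2.symm

theorem hFl_sum {ι : Type*} (t : Finset ι) (hs : ∀ x, s (s x) = x) (g : ι → F)
    (c : ι → Fin N → F) :
    ∑ j ∈ t, g j • hFl s (c j) = hFl s (∑ j ∈ t, s (g j) • c j) := by
  classical
  induction t using Finset.induction_on with
  | empty => ext; simp [hFl, hF]
  | insert a t ha ih =>
    rw [Finset.sum_insert ha, Finset.sum_insert ha, ih]
    apply LinearMap.ext
    intro x
    change g a * hF s x (c a) + hF s x _ = hF s x _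
    rw [hF_add_right, hF_smul_right, hs]

theorem finrank_dual (hs : ∀ x, s (s x) = x) (C : Submodule F (Fin N → F)) :
    finrank F C + finrank F (dualCode (fun x => s x) C) = N := by
  classical
  let B := Module.finBasis F C
  let φ : Fin (finrank F C) → Module.Dual F (Fin N → F) := fun j => hFl s (B j : Fin N → F)
  have hli : LinearIndependent F φ := by
    rw [Fintype.linearIndependent_iff]
    intro g hg j
    have h1 : hFl s (∑ j, s (g j) • (B j : Fin N → F)) = 0 := by
      rw [← hFl_sum s _ hs]; exact hg
    have h2 : ∑ j, s (g j) • (B j : Fin N → F) = 0 :=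
      hF_nondeg s hs _ fun x => LinearMap.congr_fun h1 x
    have h3 : ∑ j, s (g j) • B j = 0 := by
      apply Subtype.ext
      push_cast
      exact h2
    have h4 := Fintype.linearIndependent_iff.1 B.linearIndependent _ h3 j
    rw [← hs (g j), h4, map_zero]
  have hd : dualCode (fun x => s x) C = (Submodule.span F (Set.range φ)).dualCoannihilator := by
    ext v
    rw [mem_dual, Submodule.mem_dualCoannihilator]
    constructor
    · intro h ψ hψ
      induction hψ using Submodule.span_induction with
      | mem x hx => obtain ⟨j, rfl⟩ := hx; exact h _ (B j).2
      | zero => rfl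
      | add x y _ _ hx hy => rw [LinearMap.add_apply, hx, hy, add_zero]
      | smul a x _ hx => rw [LinearMap.smul_apply, hx, smul_zero]
    · intro h c hc
      have h1 := B.sum_repr ⟨c, hc⟩
      have h2 : c = ∑ j, (s (s (B.repr ⟨c, hc⟩ j))) • (B j : Fin N → F) := by
        have := congrArg Subtype.val h1
        push_cast at this
        simp only [hs]
        exact this.symm
      have h3 : hFl s c ∈ Submodule.span F (Set.range φ) := by
        rw [h2, ← hFl_sum s _ hs (fun j => s (B.repr ⟨c, hc⟩ j))]
        exact Submodule.sum_mem _ fun j _ =>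
          Submodule.smul_mem _ _ (Submodule.subset_span ⟨j, rfl⟩)
      exact h _ h3
  have h5 := Subspace.finrank_add_finrank_dualCoannihilator_eq (Submodule.span F (Set.range φ))
  rw [finrank_span_eq_card hli, ← hd] at h5
  simpa using h5

theorem card_pow_add (r : ℕ) (hr : 1 < r) (ε : F) (hε : ε ≠ 0 ) (c : F) :
    Nat.card {a : F // a ^ r + ε * a = c} ≤ r := by
  classical
  let P : Polynomial F := Polynomial.X ^ r + (Polynomial.C ε * Polynomial.X - Polynomial.C c)
  have hdeg : (Polynomial.C ε * Polynomial.X - Polynomial.C c).degree < (r : WithBot ℕ) := by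
    rw [sub_eq_add_neg, ← Polynomial.C_neg, Polynomial.degree_linear hε]
    exact_mod_cast hr
  have hm : P.Monic := Polynomial.monic_X_pow_add hdeg
  have hn : P.natDegree = r := by
    apply Polynomial.natDegree_eq_of_degree_eq_some
    show (Polynomial.X ^ r + _ : Polynomial F).degree = _
    rw [Polynomial.degree_add_eq_left_of_degree_lt] <;> rw [Polynomial.degree_X_pow]
    exact hdeg
  have hsub : ∀ a : {a : F // a ^ r + ε * a = c}, a.1 ∈ P.roots.toFinset := by
    intro a
    rw [Multiset.mem_toFinset, Polynomial.mem_roots hm.ne_zero]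
    simp only [P, Polynomial.IsRoot.def, Polynomial.eval_add, Polynomial.eval_sub,
      Polynomial.eval_pow, Polynomial.eval_X, Polynomial.eval_mul, Polynomial.eval_C]
    linear_combination a.2
  calc Nat.card {a : F // a ^ r + ε * a = c} ≤ Nat.card P.roots.toFinset :=
        Nat.card_le_card_of_injective (fun a => ⟨a.1, hsub a⟩) fun a b h => by
          simpa [Subtype.ext_iff] using h
    _ = P.roots.toFinset.card := by rw [Nat.card_eq_fintype_card, Fintype.card_coe]
    _ ≤ P.roots.card := Multiset.toFinset_card_le _
    _ ≤ r := hn ▸ Polynomial.card_roots' P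

theorem trace_count (r : ℕ) (hr : 1 < r) (hcard : Fintype.card F = r ^ 2)
    (hsr : ∀ x, s x = x ^ r) (hs : ∀ x, s (s x) = x) (c : F) (hc : s c = c) :
    Nat.card {a : F // a + s a = c} = r := by
  classical
  let T : F →+ F := AddMonoidHom.id F + s.toAddMonoidHom
  have hT : ∀ a, T a = a + s a := fun a => rfl
  have hk : ∀ c, Nat.card {a : F // a + s a = c} ≤ r := by
    intro c
    have := card_pow_add r hr (1 : F) one_ne_zero c
    simpa only [one_mul, hsr, add_comm] using this
  let Fix : Finset F := Finset.univ.filter fun x => s x = x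
  have hfix : Fix.card ≤ r := by
    have := card_pow_add r hr (-1 : F) (by simp) 0
    rw [Nat.card_eq_fintype_card, Fintype.card_subtype] at this
    refine le_trans (Finset.card_le_card ?_) this
    intro x hx
    simp only [Fix, Finset.mem_filter, Finset.mem_univ, true_and] at hx ⊢
    rw [← hsr, hx]; ring
  have hsum : Fintype.card F = ∑ y ∈ Fix, (Finset.univ.filter fun a : F => a + s a = y).card := by
    rw [← Finset.card_univ]
    apply Finset.card_eq_sum_card_fiberwise
    intro a _
    simp [Fix, hs, add_comm]
  have hk' : ∀ y, (Finset.univ.filter fun a : F => a + s a = y).card ≤ r := by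
    intro y
    have := hk y
    rwa [Nat.card_eq_fintype_card, Fintype.card_subtype] at this
  rw [Nat.card_eq_fintype_card, Fintype.card_subtype]
  by_contra hne
  have hlt := lt_of_le_of_ne (hk' c) hne
  have hcF : c ∈ Fix := by simp [Fix, hc]
  have h1 : ∑ y ∈ Fix, (Finset.univ.filter fun a : F => a + s a = y).card < ∑ y ∈ Fix, r :=
    Finset.sum_lt_sum (fun y _ => hk' y) ⟨c, hcF, hlt⟩
  rw [← hsum, hcard, Finset.sum_const, smul_eq_mul] at h1
  nlinarith

theorem dual_anti {C D : Submodule F (Fin N → F)} (h : C ≤ D) :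
    dualCode (fun x => s x) D ≤ dualCode (fun x => s x) C :=
  fun _ hv c hc => hv c (h hc)

theorem sd_eq {C D : Submodule F (Fin N → F)} (hC : C = dualCode (fun x => s x) C)
    (hD : D = dualCode (fun x => s x) D) (h : C ≤ D) : C = D := by
  refine le_antisymm h ?_
  rw [hC, hD]
  exact dual_anti s h

theorem main_count (r : ℕ) (hr : 1 < r) (hcard : Fintype.card F = r ^ 2)
    (hsr : ∀ x, s x = x ^ r) (hs : ∀ x, s (s x) = x)
    (C : Submodule F (Fin N → F)) (hC : C = dualCode (fun x => s x) C)
    (E : Submodule F (Fin N → F)) (hE : E ≤ C)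
    (hdim : 2 * (finrank F E + 1) = N) :
    Nat.card {D : Submodule F (Fin N → F) // D = dualCode (fun x => s x) D ∧ E ≤ D} = r + 1 := by
  classical
  have hdC := finrank_dual s hs C
  rw [← hC] at hdC
  have hdE := finrank_dual s hs E
  have hmC : ∀ v, v ∈ C ↔ ∀ c ∈ C, hF s v c = 0 := fun v => by
    conv_lhs => rw [hC]
    exact mem_dual s C v
  have hEE : C ≤ dualCode (fun x => s x) E := by
    rw [hC]; exact dual_anti s hE
  obtain ⟨u, huC, huE⟩ : ∃ u ∈ C, u ∉ E := by
    by_contra! h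
    have := Submodule.finrank_mono (show C ≤ E from h)
    omega
  have hCE : E ⊔ Submodule.span F {u} = C := by
    apply Submodule.eq_of_le_of_finrank_le
    · exact sup_le hE (by simpa using huC)
    · have : finrank F E < finrank F ↥(E ⊔ Submodule.span F {u}) := by
        apply Submodule.finrank_lt_finrank_of_lt
        refine lt_of_le_of_ne le_sup_left fun h => huE ?_
        rw [h]
        exact Submodule.mem_sup_right (Submodule.mem_span_singleton_self u)
      omega
  have hCmem : ∀ x, x ∈ dualCode (fun x => s x) E → hF s x u = 0 → x ∈ C := by
    intro x hx hxu
    rw [hmC]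
    intro c hc
    rw [← hCE, Submodule.mem_sup] at hc
    obtain ⟨e, he, z, hz, rfl⟩ := hc
    obtain ⟨k, rfl⟩ := Submodule.mem_span_singleton.1 hz
    rw [hF_add_right, hF_smul_right, hxu, (mem_dual s E x).1 hx e he]
    simp
  obtain ⟨w, hwE, hwu⟩ : ∃ w ∈ dualCode (fun x => s x) E, hF s w u = 1 := by
    obtain ⟨w, hw, hwC⟩ : ∃ w ∈ dualCode (fun x => s x) E, w ∉ C := by
      by_contra! h
      have := Submodule.finrank_mono (show dualCode (fun x => s x) E ≤ C from h)
      omega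
    have h0 : hF s w u ≠ 0 := fun h => hwC (hCmem w hw h)
    refine ⟨(hF s w u)⁻¹ • w, Submodule.smul_mem _ _ hw, ?_⟩
    rw [hF_smul_left, inv_mul_cancel₀ h0]
  have huw : hF s u w = 1 := by rw [← hF_symm s hs, hwu, map_one]
  have huu : hF s u u = 0 := (hmC u).1 huC u huC
  have hwC : w ∉ C := fun h => by
    have := (hmC w).1 h u huC
    rw [hwu] at this
    exact one_ne_zero this
  -- decomposition
  have hdec : ∀ x ∈ dualCode (fun x => s x) E, ∃ e ∈ E, ∃ α : F,
      x = e + α • u + hF s x u • w := by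
    intro x hx
    have h1 : x + (-hF s x u) • w ∈ C := by
      apply hCmem _ (Submodule.add_mem _ hx (Submodule.smul_mem _ _ hwE))
      rw [hF_add_left, hF_smul_left, hwu]; ring
    rw [← hCE, Submodule.mem_sup] at h1
    obtain ⟨e, he, z, hz, h⟩ := h1
    obtain ⟨k, rfl⟩ := Submodule.mem_span_singleton.1 hz
    refine ⟨e, he, k, ?_⟩
    rw [h]; module
  have hEl : ∀ x ∈ dualCode (fun x => s x) E, ∀ e ∈ E, hF s x e = 0 := fun x hx => hx
  have hEr : ∀ x ∈ dualCode (fun x => s x) E, ∀ e ∈ E, hF s e x = 0 :=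
    fun x hx e he => hF_symm0 s hs (hx e he)
  have hvE : ∀ a : F, w + a • u ∈ dualCode (fun x => s x) E := fun a =>
    Submodule.add_mem _ hwE (Submodule.smul_mem _ _ (hEE huC))
  have hvv : ∀ a : F, hF s (w + a • u) (w + a • u) = hF s w w + (a + s a) := by
    intro a
    simp only [hF_add_left, hF_add_right, hF_smul_left, hF_smul_right, huu, huw, hwu]
    ring
  have huv : ∀ a : F, hF s u (w + a • u) = 1 := by
    intro a
    rw [hF_add_right, hF_smul_right, huu, huw]; ring
  let Dd : F → Submodule F (Fin N → F) := fun a => E ⊔ Submodule.span F {w + a • u}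
  have hvD : ∀ a, w + a • u ∈ Dd a := fun a =>
    Submodule.mem_sup_right (Submodule.mem_span_singleton_self _)
  have hDsd : ∀ a, a + s a = -hF s w w → Dd a = dualCode (fun x => s x) (Dd a) := by
    intro a ha
    have hv0 : hF s (w + a • u) (w + a • u) = 0 := by rw [hvv, ha]; ring
    apply le_antisymm
    · intro x hx c hc
      change hF s x c = 0
      obtain ⟨e, he, z, hz, rfl⟩ := Submodule.mem_sup.1 hx
      obtain ⟨k, rfl⟩ := Submodule.mem_span_singleton.1 hz
      obtain ⟨e', he', z', hz', rfl⟩ := Submodule.mem_sup.1 hc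
      obtain ⟨k', rfl⟩ := Submodule.mem_span_singleton.1 hz'
      have h1 : hF s e e' = 0 := hEl e (hEE (hE he)) e' he'
      have h2 := hEl _ (hvE a) e' he'
      have h3 := hEr _ (hvE a) e he
      rw [hF_add_left, hF_add_right, hF_add_right, hF_smul_left, hF_smul_left, hF_smul_right,
        hF_smul_right, h1, h2, h3, hv0]
      simp
    · intro x hx
      have hxE : x ∈ dualCode (fun x => s x) E :=
        dual_anti s (show E ≤ Dd a from le_sup_left) hx
      obtain ⟨e, he, α, hxe⟩ := hdec x hxE
      have hxv : hF s x (w + a • u) = 0 := hx _ (hvD a)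
      set β := hF s x u with hβ
      have hx2 : x = e + (α - β * a) • u + β • (w + a • u) := by
        rw [hxe]; module
      have h4 : α - β * a = 0 := by
        rw [hx2, hF_add_left, hF_add_left, hF_smul_left, hF_smul_left, hv0, huv,
          hEr _ (hvE a) e he] at hxv
        simpa using hxv
      rw [hx2, h4, zero_smul, add_zero]
      exact Submodule.add_mem _ (Submodule.mem_sup_left he) (Submodule.smul_mem _ _ (hvD a))
  let A := {a : F // a + s a = -hF s w w}
  have hA : Nat.card A = r := by
    apply trace_count s r hr hcard hsr hs
    rw [map_neg, hF_symm s hs]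
  let f : Option A → {D : Submodule F (Fin N → F) // D = dualCode (fun x => s x) D ∧ E ≤ D} :=
    fun o => match o with
    | none => ⟨C, hC, hE⟩
    | some a => ⟨Dd a.1, hDsd a.1 a.2, le_sup_left⟩
  have hnone : ∀ a : F, C ≠ Dd a := by
    intro a h
    have h1 : w + a • u ∈ C := h ▸ hvD a
    exact hwC ((Submodule.add_mem_iff_left _ (Submodule.smul_mem _ _ huC)).1 h1)
  have hf : Function.Bijective f := by
    constructor
    · rintro (_ | a) (_ | b) h
      · rfl
      · exact absurd (congrArg Subtype.val h) (hnone b.1)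
      · exact absurd (congrArg Subtype.val h).symm (hnone a.1)
      · have h1 : Dd a.1 = Dd b.1 := congrArg Subtype.val h
        have ha := hvD a.1
        have hb : w + b.1 • u ∈ Dd a.1 := h1 ▸ hvD b.1
        have h2 : (a.1 - b.1) • u ∈ Dd a.1 := by
          have := Submodule.sub_mem _ ha hb
          convert this using 1
          module
        rw [hDsd a.1 a.2] at h2
        have h3 : hF s ((a.1 - b.1) • u) (w + a.1 • u) = 0 := h2 _ ha
        rw [hF_smul_left, huv, mul_one, sub_eq_zero] at h3
        exact congrArg some (Subtype.ext h3)
    · rintro ⟨D, hD, hED⟩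
      by_cases hDC : D ≤ C
      · exact ⟨none, Subtype.ext (sd_eq s hD hC hDC).symm⟩
      · obtain ⟨x, hxD, hxC⟩ := Set.not_subset.1 hDC
        have hDE : D ≤ dualCode (fun x => s x) E := by
          rw [hD]; exact dual_anti s hED
        have hb : hF s x u ≠ 0 := fun h => hxC (hCmem x (hDE hxD) h)
        obtain ⟨e, he, α, hxe⟩ := hdec x (hDE hxD)
        set β := hF s x u with hβ
        have hv : w + (β⁻¹ * α) • u ∈ D := by
          have h1 : β⁻¹ • (x - e) ∈ D := Submodule.smul_mem _ _ (Submodule.sub_mem _ hxD (hED he))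
          convert h1 using 1
          have h2 : x - e = α • u + β • w := by
            rw [sub_eq_iff_eq_add]; rw [hxe]; module
          rw [h2, smul_add, smul_smul, smul_smul, inv_mul_cancel₀ hb, one_smul, add_comm]
        have hv0 : hF s (w + (β⁻¹ * α) • u) (w + (β⁻¹ * α) • u) = 0 := by
          have h1 := hv
          rw [hD] at h1
          exact h1 _ hv
        have ha : (β⁻¹ * α) + s (β⁻¹ * α) = -hF s w w := by
          rw [hvv] at hv0
          linear_combination hv0
        refine ⟨some ⟨_, ha⟩, Subtype.ext ?_⟩
        apply sd_eq s (hDsd _ ha) hD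
        exact sup_le hED (by simpa using hv)
  rw [← Nat.card_congr (Equiv.ofBijective f hf), Finite.card_option, hA]

end Helpers

/-- For `q = r²`, a Hermitian self-dual code `C ≤ F_q^{2n}` and a subspace
`E ≤ C` of dimension `n-1`, there are exactly `r + 1` Hermitian self-dual codes `D` with
`E ≤ D`. -/
theorem selfDual_count_above_qH
    {F : Type} [Field F] [Fintype F] (r : ℕ) (hr : IsPrimePow r)
    (hcard : Fintype.card F = r ^ 2) {n : ℕ}
    (C : Submodule F (Fin (2 * n) → F)) (hC : C = dualCode (fun x : F => x ^ r) C)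
    (E : Submodule F (Fin (2 * n) → F)) (hE : E ≤ C)
    (hdim : Module.finrank F ↥E + 1 = n) :
    Nat.card {D : Submodule F (Fin (2 * n) → F) //
        D = dualCode (fun x : F => x ^ r) D ∧ E ≤ D} = r + 1 := by
  classical
  obtain ⟨p, k, hp, hk, rfl⟩ := hr
  haveI : Fact p.Prime := ⟨hp.nat_prime⟩
  have hcard2 : Fintype.card F = p ^ (k * 2) := by rw [hcard, pow_mul]
  haveI : CharP F p := charP_of_card_eq_prime_pow hcard2
  have hsr : ∀ x : F, iterateFrobenius F p k x = x ^ p ^ k := fun x => iterateFrobenius_def p k x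
  have hs : ∀ x : F, iterateFrobenius F p k (iterateFrobenius F p k x) = x := by
    intro x
    rw [hsr, hsr, ← pow_mul, ← pow_two, ← hcard, FiniteField.pow_card]
  have hfun : (fun x : F => x ^ p ^ k) = fun x => iterateFrobenius F p k x :=
    funext fun x => (hsr x).symm
  rw [hfun] at hC ⊢
  exact main_count (iterateFrobenius F p k) (p ^ k)
    (Nat.one_lt_pow hk.ne' hp.nat_prime.one_lt) hcard hsr hs C hC E hE (by rw [hdim])
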